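/- Let (X,d) be a complete separable metric space and let P: P_1(X) -> P_1(X) be a convex linear map with a fixed point mu_0. Suppose N is a w_1-neighborhood of mu_0 in P_1(X) and R >= 0 are such that w_1(P^k(mu), mu_0) <= R for all mu in N and all k >= 0. Then every forward orbit of P is bounded: for each mu_1 in P_1(X) there is t in (0,1] with t mu_1 + (1-t) mu_0 in N, and for any such t one has w_1(P^k(mu_1), mu_0) <= R/t for all k >= 0. -/

import Mathlib

/-!
Mixing two measures `μ`, `ν` with a common third one, in proportions `t` and `1 - t`, multiplies
their `p`-th power transport cost by at most `t`, since the common part can be left in place. As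
`μ` is the mixture of `μ` with itself, this gives
`W(μ, mix t μ ν) ≤ (1 - t) ^ (1 / p) * W(μ, ν)`, and the triangle inequality through `mix t μ ν`
yields the reverse estimate `(1 - (1 - t) ^ (1 / p)) * W(μ, ν) ≤ W(mix t μ ν, ν)`, whose constant
is `t` when `p = 1`. A convex linear `P` fixing `μ₀` maps `mix t μ₁ μ₀` to `mix t (P μ₁) μ₀`, so a
bound on the orbit of `mix t μ₁ μ₀` becomes a bound on the orbit of `μ₁`.
-/

open MeasureTheory Topology Filter Metric Set
open scoped ENNReal NNReal

noncomputable section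

variable {X : Type*}

/-- `π` is a coupling of `μ` and `ν`, i.e. a measure on `X × X` with marginals `μ` and `ν`. -/
def IsCoupling [MeasurableSpace X] (π : Measure (X × X)) (μ ν : Measure X) : Prop :=
  π.map Prod.fst = μ ∧ π.map Prod.snd = ν

/-- The `p`-th power optimal transport cost between `μ` and `ν`. -/
def wCost [MetricSpace X] [MeasurableSpace X] (p : ℝ) (μ ν : Measure X) : ℝ≥0∞ :=
  ⨅ π ∈ {π : Measure (X × X) | IsProbabilityMeasure π ∧ IsCoupling π μ ν},
    ∫⁻ q, ENNReal.ofReal (dist q.1 q.2 ^ p) ∂π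

/-- The Wasserstein distance of order `p` (the `p`-th root of the optimal cost), as a real
number. -/
def Wp [MetricSpace X] [MeasurableSpace X] (p : ℝ) (μ ν : Measure X) : ℝ :=
  ((wCost p μ ν) ^ (1 / p)).toReal

/-- `μ` has finite `p`-th moment about the base point `x₀`. -/
def FiniteMoment [MetricSpace X] [MeasurableSpace X] (p : ℝ) (x₀ : X) (μ : Measure X) : Prop :=
  ∫⁻ x, ENNReal.ofReal (dist x₀ x ^ p) ∂μ < ⊤

/-- The Wasserstein space `P_p(X)`: Borel probability measures with finite `p`-th moment. -/
def Pp [MetricSpace X] [MeasurableSpace X] (p : ℝ) (x₀ : X) : Set (Measure X) :=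
  {μ | IsProbabilityMeasure μ ∧ FiniteMoment p x₀ μ}

/-- The convex combination `t • μ + (1 - t) • ν` of two measures. -/
def mix [MeasurableSpace X] (t : ℝ) (μ ν : Measure X) : Measure X :=
  ENNReal.ofReal t • μ + ENNReal.ofReal (1 - t) • ν

/-- `μₙ → μ` in the weak topology: integrals of bounded continuous functions converge. -/
def WeakConv [MeasurableSpace X] [TopologicalSpace X] (μs : ℕ → Measure X) (μ : Measure X) :
    Prop :=
  ∀ g : BoundedContinuousFunction X ℝ,
    Tendsto (fun n => ∫ x, g x ∂(μs n)) atTop (𝓝 (∫ x, g x ∂μ))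

/-- `μₙ → μ` with respect to the Wasserstein distance of order `p`. -/
def WpTendsto [MetricSpace X] [MeasurableSpace X] (p : ℝ) (μs : ℕ → Measure X)
    (μ : Measure X) : Prop :=
  Tendsto (fun n => Wp p (μs n) μ) atTop (𝓝 0)

/-- A set of measures is sequentially compact for the Wasserstein distance of order `p`. -/
def WpSeqCompact [MetricSpace X] [MeasurableSpace X] (p : ℝ) (S : Set (Measure X)) : Prop :=
  ∀ μs : ℕ → Measure X, (∀ n, μs n ∈ S) →
    ∃ μ ∈ S, ∃ φ : ℕ → ℕ, StrictMono φ ∧ WpTendsto p (fun n => μs (φ n)) μ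

/-- A set of measures is sequentially compact for the weak topology. -/
def WeakSeqCompact [MeasurableSpace X] [TopologicalSpace X] (S : Set (Measure X)) : Prop :=
  ∀ μs : ℕ → Measure X, (∀ n, μs n ∈ S) →
    ∃ μ ∈ S, ∃ φ : ℕ → ℕ, StrictMono φ ∧ WeakConv (fun n => μs (φ n)) μ

section Mix

variable {α β : Type*} [MeasurableSpace α] [MeasurableSpace β] {t : ℝ}

lemma ofReal_add_ofReal_one_sub (ht : t ∈ Icc (0 : ℝ) 1) :
    ENNReal.ofReal t + ENNReal.ofReal (1 - t) = 1 := by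
  rw [← ENNReal.ofReal_add ht.1 (sub_nonneg.2 ht.2), add_sub_cancel, ENNReal.ofReal_one]

lemma isProbabilityMeasure_mix (ht : t ∈ Icc (0 : ℝ) 1) (μ ν : Measure α)
    [IsProbabilityMeasure μ] [IsProbabilityMeasure ν] : IsProbabilityMeasure (mix t μ ν) :=
  ⟨by simp [mix, ofReal_add_ofReal_one_sub ht]⟩

lemma mix_self (ht : t ∈ Icc (0 : ℝ) 1) (μ : Measure α) : mix t μ μ = μ := by
  rw [mix, ← add_smul, ofReal_add_ofReal_one_sub ht, one_smul]

lemma mix_one_sub (t : ℝ) (μ ν : Measure α) : mix (1 - t) μ ν = mix t ν μ := by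
  simp [mix, add_comm]

lemma map_mix (t : ℝ) (μ ν : Measure α) {f : α → β} (hf : Measurable f) :
    (mix t μ ν).map f = mix t (μ.map f) (ν.map f) := by
  simp [mix, Measure.map_add _ _ hf]

lemma lintegral_mix (t : ℝ) (μ ν : Measure α) (f : α → ℝ≥0∞) :
    ∫⁻ x, f x ∂(mix t μ ν) =
      ENNReal.ofReal t * ∫⁻ x, f x ∂μ + ENNReal.ofReal (1 - t) * ∫⁻ x, f x ∂ν := by
  simp [mix, lintegral_add_measure]

lemma iterate_mix_of_mapsTo {P : Measure α → Measure α} {S : Set (Measure α)} {ν : Measure α}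
    (hPS : MapsTo P S S) (hP : ∀ μ ∈ S, P (mix t μ ν) = mix t (P μ) ν)
    {μ : Measure α} (hμ : μ ∈ S) (k : ℕ) : P^[k] (mix t μ ν) = mix t (P^[k] μ) ν := by
  induction k with
  | zero => rfl
  | succ k ih =>
    rw [Function.iterate_succ_apply', Function.iterate_succ_apply', ih,
      hP _ (hPS.iterate k hμ)]

end Mix

section Gluing

variable {α β γ : Type*} [MeasurableSpace α] [MeasurableSpace β] [MeasurableSpace γ]

lemma map_compProd_comap (μ : Measure α) [SFinite μ] (κ : ProbabilityTheory.Kernel β γ)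
    [ProbabilityTheory.IsSFiniteKernel κ] {f : α → β} (hf : Measurable f) :
    (μ.compProd (κ.comap f hf)).map (Prod.map f id) = (μ.map f).compProd κ := by
  ext s hs
  have hfs : Measurable (Prod.map f (id : γ → γ)) := hf.prodMap measurable_id
  rw [Measure.map_apply hfs hs, Measure.compProd_apply (hfs hs), Measure.compProd_apply hs,
    lintegral_map (ProbabilityTheory.Kernel.measurable_kernel_prodMk_left hs) hf]
  rfl

theorem exists_measure_gluing [StandardBorelSpace γ] [Nonempty γ] (π : Measure (α × β)) [SFinite π]
    (π' : Measure (β × γ)) [IsFiniteMeasure π'] (h : π.snd = π'.fst) :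
    ∃ τ : Measure ((α × β) × γ), τ.fst = π ∧ τ.map (Prod.map Prod.snd id) = π' := by
  refine ⟨π.compProd (π'.condKernel.comap Prod.snd measurable_snd), Measure.fst_compProd _ _, ?_⟩
  rw [map_compProd_comap π π'.condKernel measurable_snd]
  change π.snd.compProd π'.condKernel = π'
  rw [h, π'.disintegrate]

end Gluing

section Coupling

variable [MeasurableSpace X] {μ ν μ' ν' : Measure X} {π π' : Measure (X × X)}

lemma IsCoupling.isProbabilityMeasure (h : IsCoupling π μ ν) [IsProbabilityMeasure μ] :
    IsProbabilityMeasure π :=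
  have : IsProbabilityMeasure (π.map Prod.fst) := h.1 ▸ ‹IsProbabilityMeasure μ›
  Measure.isProbabilityMeasure_of_map Prod.fst

lemma isCoupling_prod (μ ν : Measure X) [IsProbabilityMeasure μ] [IsProbabilityMeasure ν] :
    IsCoupling (μ.prod ν) μ ν :=
  ⟨by simp, by simp⟩

lemma isCoupling_map_prodMk {Ω : Type*} [MeasurableSpace Ω] (τ : Measure Ω) {f g : Ω → X}
    (hf : Measurable f) (hg : Measurable g) :
    IsCoupling (τ.map fun ω => (f ω, g ω)) (τ.map f) (τ.map g) :=
  ⟨Measure.map_map measurable_fst (hf.prodMk hg), Measure.map_map measurable_snd (hf.prodMk hg)⟩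

lemma IsCoupling.mix (h : IsCoupling π μ ν) (h' : IsCoupling π' μ' ν') (t : ℝ) :
    IsCoupling (mix t π π') (mix t μ μ') (mix t ν ν') :=
  ⟨by rw [map_mix t _ _ measurable_fst, h.1, h'.1],
    by rw [map_mix t _ _ measurable_snd, h.2, h'.2]⟩

end Coupling

section TransportCost

variable [MetricSpace X] [MeasurableSpace X] {p t : ℝ}

/-- The `p`-th power cost of the transport plan `π`, the quantity minimized by `wCost p`. -/
def transportCost (p : ℝ) (π : Measure (X × X)) : ℝ≥0∞ :=
  ∫⁻ q, ENNReal.ofReal (dist q.1 q.2 ^ p) ∂π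

lemma wCost_eq_iInf_transportCost (p : ℝ) (μ ν : Measure X) [IsProbabilityMeasure μ] :
    wCost p μ ν = ⨅ π : {π // IsCoupling π μ ν}, transportCost p π.1 := by
  rw [iInf_subtype]
  refine iInf_congr fun π => iInf_congr_Prop ?_ fun _ => rfl
  exact ⟨And.right, fun h => ⟨h.isProbabilityMeasure, h⟩⟩

lemma wCost_le_transportCost (p : ℝ) {μ ν : Measure X} [IsProbabilityMeasure μ]
    {π : Measure (X × X)} (h : IsCoupling π μ ν) : wCost p μ ν ≤ transportCost p π :=
  iInf₂_le π ⟨h.isProbabilityMeasure, h⟩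

lemma transportCost_mix (p t : ℝ) (π π' : Measure (X × X)) :
    transportCost p (mix t π π') =
      ENNReal.ofReal t * transportCost p π + ENNReal.ofReal (1 - t) * transportCost p π' :=
  lintegral_mix t π π' _

theorem wCost_mix_le (p : ℝ) (ht : t ∈ Icc (0 : ℝ) 1) (μ μ' ν ν' : Measure X)
    [IsProbabilityMeasure μ] [IsProbabilityMeasure μ'] [IsProbabilityMeasure ν]
    [IsProbabilityMeasure ν'] :
    wCost p (mix t μ μ') (mix t ν ν') ≤
      ENNReal.ofReal t * wCost p μ ν + ENNReal.ofReal (1 - t) * wCost p μ' ν' := by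
  have := isProbabilityMeasure_mix ht μ μ'
  have : Nonempty {π // IsCoupling π μ ν} := ⟨⟨_, isCoupling_prod μ ν⟩⟩
  have : Nonempty {π // IsCoupling π μ' ν'} := ⟨⟨_, isCoupling_prod μ' ν'⟩⟩
  rw [wCost_eq_iInf_transportCost p μ, wCost_eq_iInf_transportCost p μ',
    ENNReal.mul_iInf (by simp), ENNReal.mul_iInf (by simp)]
  refine ENNReal.le_iInf_add_iInf fun π π' => ?_
  rw [← transportCost_mix]
  exact wCost_le_transportCost p (π.2.mix π'.2 t)

variable [OpensMeasurableSpace X] [SecondCountableTopology X]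

lemma transportCost_map_prodMk {Ω : Type*} [MeasurableSpace Ω] (p : ℝ) (τ : Measure Ω)
    {f g : Ω → X} (hf : Measurable f) (hg : Measurable g) :
    transportCost p (τ.map fun ω => (f ω, g ω)) =
      ∫⁻ ω, ENNReal.ofReal (dist (f ω) (g ω) ^ p) ∂τ :=
  lintegral_map (by fun_prop) (hf.prodMk hg)

theorem wCost_self (hp : p ≠ 0) (μ : Measure X) [IsProbabilityMeasure μ] : wCost p μ μ = 0 := by
  have hdiag : IsCoupling (μ.map fun x => (x, x)) μ μ := by
    simpa only [Measure.map_id'] using isCoupling_map_prodMk μ measurable_id' measurable_id'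
  refine nonpos_iff_eq_zero.1 ((wCost_le_transportCost p hdiag).trans_eq ?_)
  rw [transportCost_map_prodMk p μ measurable_id' measurable_id']
  simp [Real.zero_rpow hp]

theorem wCost_mix_right_le (hp : p ≠ 0) (ht : t ∈ Icc (0 : ℝ) 1) (μ ν σ : Measure X)
    [IsProbabilityMeasure μ] [IsProbabilityMeasure ν] [IsProbabilityMeasure σ] :
    wCost p (mix t μ σ) (mix t ν σ) ≤ ENNReal.ofReal t * wCost p μ ν := by
  simpa [wCost_self hp] using wCost_mix_le p ht μ σ ν σ

lemma lintegral_dist_rpow_triangle {Ω : Type*} [MeasurableSpace Ω] (hp : 1 ≤ p) (τ : Measure Ω)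
    {f g h : Ω → X} (hf : Measurable f) (hg : Measurable g) (hh : Measurable h) :
    (∫⁻ ω, ENNReal.ofReal (dist (f ω) (h ω) ^ p) ∂τ) ^ (1 / p) ≤
      (∫⁻ ω, ENNReal.ofReal (dist (f ω) (g ω) ^ p) ∂τ) ^ (1 / p) +
        (∫⁻ ω, ENNReal.ofReal (dist (g ω) (h ω) ^ p) ∂τ) ^ (1 / p) := by
  have hp₀ : 0 ≤ p := zero_le_one.trans hp
  simp only [← ENNReal.ofReal_rpow_of_nonneg dist_nonneg hp₀, ← edist_dist]
  calc (∫⁻ ω, edist (f ω) (h ω) ^ p ∂τ) ^ (1 / p)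
      ≤ (∫⁻ ω, (edist (f ω) (g ω) + edist (g ω) (h ω)) ^ p ∂τ) ^ (1 / p) := by
        gcongr with ω
        exact edist_triangle _ _ _
    _ ≤ _ := ENNReal.lintegral_Lp_add_le (hf.edist hg).aemeasurable (hg.edist hh).aemeasurable hp

end TransportCost

section ExtendedWasserstein

variable [MetricSpace X] [MeasurableSpace X] {p t : ℝ}

/-- The extended Wasserstein distance of order `p`, which is to `Wp` what `edist` is to `dist`:
it keeps the value `⊤` that `Wp` replaces by `0`. -/
def eWp (p : ℝ) (μ ν : Measure X) : ℝ≥0∞ :=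
  wCost p μ ν ^ (1 / p)

lemma eWp_eq_iInf_transportCost (hp : 0 < p) (μ ν : Measure X) [IsProbabilityMeasure μ] :
    eWp p μ ν = ⨅ π : {π // IsCoupling π μ ν}, transportCost p π.1 ^ (1 / p) := by
  rw [eWp, wCost_eq_iInf_transportCost]
  exact (ENNReal.orderIsoRpow (1 / p) (one_div_pos.2 hp)).map_iInf _

lemma eWp_le_transportCost_rpow (hp : 0 ≤ p) {μ ν : Measure X} [IsProbabilityMeasure μ]
    {π : Measure (X × X)} (h : IsCoupling π μ ν) : eWp p μ ν ≤ transportCost p π ^ (1 / p) :=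
  ENNReal.rpow_le_rpow (wCost_le_transportCost p h) (one_div_nonneg.2 hp)

variable [OpensMeasurableSpace X] [SecondCountableTopology X]

theorem eWp_mix_right_le (hp : 0 < p) (ht : t ∈ Icc (0 : ℝ) 1) (μ ν σ : Measure X)
    [IsProbabilityMeasure μ] [IsProbabilityMeasure ν] [IsProbabilityMeasure σ] :
    eWp p (mix t μ σ) (mix t ν σ) ≤ ENNReal.ofReal (t ^ (1 / p)) * eWp p μ ν := by
  have hp' : 0 ≤ 1 / p := one_div_nonneg.2 hp.le
  rw [← ENNReal.ofReal_rpow_of_nonneg ht.1 hp', eWp, eWp, ← ENNReal.mul_rpow_of_nonneg _ _ hp']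
  exact ENNReal.rpow_le_rpow (wCost_mix_right_le hp.ne' ht μ ν σ) hp'

variable [StandardBorelSpace X]

lemma eWp_le_add_transportCost_rpow (hp : 1 ≤ p) {μ ν ρ : Measure X} [IsProbabilityMeasure μ]
    [IsProbabilityMeasure ν] {π π' : Measure (X × X)} (h : IsCoupling π μ ν)
    (h' : IsCoupling π' ν ρ) :
    eWp p μ ρ ≤ transportCost p π ^ (1 / p) + transportCost p π' ^ (1 / p) := by
  have := h.isProbabilityMeasure
  have := h'.isProbabilityMeasure
  have : Nonempty X := nonempty_of_isProbabilityMeasure μ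
  obtain ⟨τ, rfl, rfl⟩ := exists_measure_gluing π π' (h.2.trans h'.1.symm)
  have hx : Measurable fun q : (X × X) × X => q.1.1 := by fun_prop
  have hy : Measurable fun q : (X × X) × X => q.1.2 := by fun_prop
  have hz : Measurable fun q : (X × X) × X => q.2 := by fun_prop
  have hμ : τ.map (fun q => q.1.1) = μ := by
    rw [← h.1]
    exact (Measure.map_map measurable_fst measurable_fst).symm
  have hρ : τ.map (fun q => q.2) = ρ := by
    rw [← h'.2]
    exact (Measure.map_map measurable_snd (measurable_snd.prodMap measurable_id)).symm
  have hμρ := isCoupling_map_prodMk τ hx hz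
  rw [hμ, hρ] at hμρ
  refine (eWp_le_transportCost_rpow (zero_le_one.trans hp) hμρ).trans ?_
  rw [transportCost_map_prodMk p τ hx hz]
  refine (lintegral_dist_rpow_triangle hp τ hx hy hz).trans_eq ?_
  rw [← transportCost_map_prodMk p τ hx hy, ← transportCost_map_prodMk p τ hy hz]
  rfl

theorem eWp_triangle (hp : 1 ≤ p) (μ ν ρ : Measure X) [IsProbabilityMeasure μ]
    [IsProbabilityMeasure ν] : eWp p μ ρ ≤ eWp p μ ν + eWp p ν ρ := by
  have hp₀ : 0 < p := zero_lt_one.trans_le hp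
  rw [eWp_eq_iInf_transportCost hp₀ μ ν, eWp_eq_iInf_transportCost hp₀ ν ρ]
  exact ENNReal.le_iInf_add_iInf fun π π' => eWp_le_add_transportCost_rpow hp π.2 π'.2

end ExtendedWasserstein

section WassersteinSpace

variable [MetricSpace X] [MeasurableSpace X] {p t : ℝ} {x₀ : X} {μ ν ρ σ : Measure X}

lemma mix_mem_Pp (ht : t ∈ Icc (0 : ℝ) 1) (hμ : μ ∈ Pp p x₀) (hν : ν ∈ Pp p x₀) :
    mix t μ ν ∈ Pp p x₀ := by
  obtain ⟨_, hμ⟩ := hμ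
  obtain ⟨_, hν⟩ := hν
  refine ⟨isProbabilityMeasure_mix ht μ ν, ?_⟩
  rw [FiniteMoment, lintegral_mix]
  exact ENNReal.add_lt_top.2
    ⟨ENNReal.mul_lt_top ENNReal.ofReal_lt_top hμ, ENNReal.mul_lt_top ENNReal.ofReal_lt_top hν⟩

variable [OpensMeasurableSpace X] [SecondCountableTopology X]

lemma eWp_dirac_right_ne_top (hp : 0 ≤ p) (hμ : μ ∈ Pp p x₀) :
    eWp p μ (Measure.dirac x₀) ≠ ⊤ := by
  obtain ⟨_, hμ⟩ := hμ
  refine ne_top_of_le_ne_top ?_ (eWp_le_transportCost_rpow hp (isCoupling_prod μ (.dirac x₀)))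
  refine ENNReal.rpow_ne_top_of_nonneg (one_div_nonneg.2 hp) ?_
  rw [Measure.prod_dirac, transportCost_map_prodMk p μ measurable_id' measurable_const]
  simpa only [dist_comm] using hμ.ne

lemma eWp_dirac_left_ne_top (hp : 0 ≤ p) (hμ : μ ∈ Pp p x₀) :
    eWp p (Measure.dirac x₀) μ ≠ ⊤ := by
  obtain ⟨_, hμ⟩ := hμ
  refine ne_top_of_le_ne_top ?_ (eWp_le_transportCost_rpow hp (isCoupling_prod (.dirac x₀) μ))
  refine ENNReal.rpow_ne_top_of_nonneg (one_div_nonneg.2 hp) ?_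
  rw [Measure.dirac_prod, transportCost_map_prodMk p μ measurable_const measurable_id']
  exact hμ.ne

variable [StandardBorelSpace X]

lemma eWp_ne_top (hp : 1 ≤ p) (hμ : μ ∈ Pp p x₀) (hν : ν ∈ Pp p x₀) : eWp p μ ν ≠ ⊤ := by
  have hp₀ : 0 ≤ p := zero_le_one.trans hp
  have := hμ.1
  exact ne_top_of_le_ne_top
    (ENNReal.add_ne_top.2 ⟨eWp_dirac_right_ne_top hp₀ hμ, eWp_dirac_left_ne_top hp₀ hν⟩)
    (eWp_triangle hp μ (Measure.dirac x₀) ν)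

theorem Wp_triangle (hp : 1 ≤ p) (hμ : μ ∈ Pp p x₀) (hν : ν ∈ Pp p x₀) (hρ : ρ ∈ Pp p x₀) :
    Wp p μ ρ ≤ Wp p μ ν + Wp p ν ρ := by
  have := hμ.1
  have := hν.1
  exact ENNReal.toReal_le_add (eWp_triangle hp μ ν ρ) (eWp_ne_top hp hμ hν) (eWp_ne_top hp hν hρ)

theorem Wp_mix_right_le (hp : 1 ≤ p) (ht : t ∈ Icc (0 : ℝ) 1) (hμ : μ ∈ Pp p x₀)
    (hν : ν ∈ Pp p x₀) [IsProbabilityMeasure σ] :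
    Wp p (mix t μ σ) (mix t ν σ) ≤ t ^ (1 / p) * Wp p μ ν := by
  have := hμ.1
  have := hν.1
  have h := ENNReal.toReal_mono
    (ENNReal.mul_ne_top ENNReal.ofReal_ne_top (eWp_ne_top hp hμ hν))
    (eWp_mix_right_le (zero_lt_one.trans_le hp) ht μ ν σ)
  rwa [ENNReal.toReal_mul, ENNReal.toReal_ofReal (Real.rpow_nonneg ht.1 _)] at h

theorem Wp_mix_self_right_le (hp : 1 ≤ p) (ht : t ∈ Icc (0 : ℝ) 1) (hμ : μ ∈ Pp p x₀)
    (hν : ν ∈ Pp p x₀) : Wp p (mix t μ ν) ν ≤ t ^ (1 / p) * Wp p μ ν := by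
  have := hν.1
  simpa only [mix_self ht] using Wp_mix_right_le (σ := ν) hp ht hμ hν

theorem mul_Wp_le_Wp_mix_self_right (hp : 1 ≤ p) (ht : t ∈ Icc (0 : ℝ) 1) (hμ : μ ∈ Pp p x₀)
    (hν : ν ∈ Pp p x₀) :
    (1 - (1 - t) ^ (1 / p)) * Wp p μ ν ≤ Wp p (mix t μ ν) ν := by
  have := hμ.1
  have ht' := Icc.one_sub_mem ht
  have hmix : Wp p μ (mix t μ ν) ≤ (1 - t) ^ (1 / p) * Wp p μ ν := by
    simpa only [mix_self ht', mix_one_sub] using Wp_mix_right_le (σ := μ) hp ht' hμ hν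
  linarith [Wp_triangle hp hμ (mix_mem_Pp ht hμ hν) hν]

lemma exists_Wp_mix_self_right_lt (hp : 1 ≤ p) (hμ : μ ∈ Pp p x₀) (hν : ν ∈ Pp p x₀) {r : ℝ}
    (hr : 0 < r) : ∃ t ∈ Ioc (0 : ℝ) 1, Wp p (mix t μ ν) ν < r := by
  have hp' : 0 < 1 / p := one_div_pos.2 (zero_lt_one.trans_le hp)
  have hlim : Tendsto (fun t : ℝ => t ^ (1 / p) * Wp p μ ν) (𝓝[>] 0) (𝓝 0) := by
    have h := ((Real.continuous_rpow_const hp'.le).tendsto 0).mul_const (Wp p μ ν)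
    rw [Real.zero_rpow hp'.ne', zero_mul] at h
    exact h.mono_left nhdsWithin_le_nhds
  obtain ⟨t, hlt, ht⟩ :=
    ((hlim.eventually_lt_const hr).and (Ioc_mem_nhdsGT zero_lt_one)).exists
  exact ⟨t, ht, (Wp_mix_self_right_le hp (Ioc_subset_Icc_self ht) hμ hν).trans_lt hlt⟩

end WassersteinSpace

theorem convex_linear_orbits_bounded_general
    [MetricSpace X] [MeasurableSpace X] [OpensMeasurableSpace X] [SecondCountableTopology X]
    [StandardBorelSpace X] {p : ℝ} (hp : 1 ≤ p) {x₀ : X}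
    {P : Measure X → Measure X} (hPmap : ∀ μ ∈ Pp p x₀, P μ ∈ Pp p x₀)
    (hPconv : ∀ t : ℝ, 0 ≤ t → t ≤ 1 → ∀ μ ∈ Pp p x₀, ∀ ν ∈ Pp p x₀,
      P (mix t μ ν) = mix t (P μ) (P ν))
    {μ₀ : Measure X} (hμ₀ : μ₀ ∈ Pp p x₀) (hfix : P μ₀ = μ₀)
    {N : Set (Measure X)}
    (hN_nbhd : ∃ ρ : ℝ, 0 < ρ ∧ ∀ μ ∈ Pp p x₀, Wp p μ μ₀ < ρ → μ ∈ N)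
    {R : ℝ} (hbdd : ∀ μ ∈ N, ∀ k : ℕ, Wp p (P^[k] μ) μ₀ ≤ R)
    {μ₁ : Measure X} (hμ₁ : μ₁ ∈ Pp p x₀) :
    (∃ t : ℝ, 0 < t ∧ t ≤ 1 ∧ mix t μ₁ μ₀ ∈ N) ∧
      (∀ t : ℝ, 0 < t → t ≤ 1 → mix t μ₁ μ₀ ∈ N →
        ∀ k : ℕ, Wp p (P^[k] μ₁) μ₀ ≤ R / (1 - (1 - t) ^ (1 / p))) := by
  constructor
  · obtain ⟨ρ, hρ, hN⟩ := hN_nbhd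
    obtain ⟨t, ht, hlt⟩ := exists_Wp_mix_self_right_lt hp hμ₁ hμ₀ hρ
    exact ⟨t, ht.1, ht.2, hN _ (mix_mem_Pp (Ioc_subset_Icc_self ht) hμ₁ hμ₀) hlt⟩
  · intro t ht₀ ht₁ htN k
    have hconst : (1 - t) ^ (1 / p) < 1 :=
      Real.rpow_lt_one (sub_nonneg.2 ht₁) (sub_lt_self 1 ht₀)
        (one_div_pos.2 (zero_lt_one.trans_le hp))
    have hPmix : ∀ μ ∈ Pp p x₀, P (mix t μ μ₀) = mix t (P μ) μ₀ := fun μ hμ => by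
      rw [hPconv t ht₀.le ht₁ μ hμ μ₀ hμ₀, hfix]
    rw [le_div_iff₀' (sub_pos.2 hconst)]
    calc (1 - (1 - t) ^ (1 / p)) * Wp p (P^[k] μ₁) μ₀
        ≤ Wp p (mix t (P^[k] μ₁) μ₀) μ₀ :=
          mul_Wp_le_Wp_mix_self_right hp ⟨ht₀.le, ht₁⟩ (MapsTo.iterate hPmap k hμ₁) hμ₀
      _ = Wp p (P^[k] (mix t μ₁ μ₀)) μ₀ := by
          rw [iterate_mix_of_mapsTo hPmap hPmix hμ₁]
      _ ≤ R := hbdd _ htN k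

/-- If `P : P₁(X) → P₁(X)` is convex linear with a fixed point `μ₀`, `N` is a
`w₁`-neighborhood of `μ₀` in `P₁(X)` and `R ≥ 0` is such that `w₁(P^k(μ), μ₀) ≤ R` for all
`μ ∈ N` and `k ≥ 0`, then every forward orbit of `P` is bounded: for each `μ₁ ∈ P₁(X)`
there is `t ∈ (0,1]` with `t μ₁ + (1-t) μ₀ ∈ N`, and for any such `t`,
`w₁(P^k(μ₁), μ₀) ≤ R/t` for all `k`. -/
theorem convex_linear_orbits_bounded
    [MetricSpace X] [MeasurableSpace X] [BorelSpace X] [CompleteSpace X]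
    [TopologicalSpace.SeparableSpace X] (x₀ : X)
    (P : Measure X → Measure X)
    (hPmap : ∀ μ ∈ Pp 1 x₀, P μ ∈ Pp 1 x₀)
    (hPconv : ∀ t : ℝ, 0 ≤ t → t ≤ 1 → ∀ μ ∈ Pp 1 x₀, ∀ ν ∈ Pp 1 x₀,
      P (mix t μ ν) = mix t (P μ) (P ν))
    (μ₀ : Measure X) (hμ₀ : μ₀ ∈ Pp 1 x₀) (hfix : P μ₀ = μ₀)
    (N : Set (Measure X)) (hN_sub : N ⊆ Pp 1 x₀) (hμ₀N : μ₀ ∈ N)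
    (hN_nbhd : ∃ ρ : ℝ, 0 < ρ ∧ ∀ μ ∈ Pp 1 x₀, Wp 1 μ μ₀ < ρ → μ ∈ N)
    (R : ℝ) (hR : 0 ≤ R)
    (hbdd : ∀ μ ∈ N, ∀ k : ℕ, Wp 1 (P^[k] μ) μ₀ ≤ R) :
    ∀ μ₁ ∈ Pp 1 x₀,
      (∃ t : ℝ, 0 < t ∧ t ≤ 1 ∧ mix t μ₁ μ₀ ∈ N) ∧
      (∀ t : ℝ, 0 < t → t ≤ 1 → mix t μ₁ μ₀ ∈ N →
        ∀ k : ℕ, Wp 1 (P^[k] μ₁) μ₀ ≤ R / t) := by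
  intro μ₁ hμ₁
  have : SecondCountableTopology X := UniformSpace.secondCountable_of_separable X
  simpa using convex_linear_orbits_bounded_general le_rfl hPmap hPconv hμ₀ hfix hN_nbhd hbdd hμ₁
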